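/- arXiv:2111.10323 — 2 statements merged into one kernel-verified Lean document; each statement's English description precedes it below -/
import Mathlib

section
/- Let $p \in (0,1)$, $q = 1-p$, $0 < d \le 1 \le u$ with $u \ne d$, and set $\tilde{k}_0(n,u,d) = \lfloor n \ln(1/d)/\ln(u/d) \rfloor$. Then $B(n,u,d,p) = 2 \sum_{k=\tilde{k}_0(n,u,d)+1}^{n} \binom{n}{k} p^k q^{n-k}$ converges, as $n \to \infty$, to $0$ if $u^p d^q < 1$, to $1$ if $u^p d^q = 1$, and to $2$ if $u^p d^q > 1$. -/
open Filter

/-- Threshold separating losing from winning numbers of heads. -/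
noncomputable def ktilde (n : ℕ) (u d : ℝ) : ℕ :=
  ⌊(n : ℝ) * Real.log (1/d) / Real.log (u/d)⌋₊

/-- Twice the probability that a Binomial(n,p) random variable exceeds the threshold. -/
noncomputable def B (n : ℕ) (u d p : ℝ) : ℝ :=
  2 * ∑ k ∈ Finset.Icc (ktilde n u d + 1) n, (n.choose k : ℝ) * p^k * (1 - p)^(n-k)

open MeasureTheory ProbabilityTheory in
lemma gauss_half : (gaussianReal 0 1).real (Set.Ioi 0) = 1 / 2 := by
  have h1 : (gaussianReal 0 1).real (Set.Ioi 0) = (gaussianReal 0 1).real (Set.Iio 0) := by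
    have h := gaussianReal_map_neg (μ := 0) (v := 1)
    rw [neg_zero] at h
    conv_lhs => rw [← h]
    rw [map_measureReal_apply (by fun_prop) measurableSet_Ioi]
    congr 1
    ext x
    simp
  have : NullSingletonClass (gaussianReal 0 1) := nullSingletonClass_gaussianReal (by simp)
  have h2 : (gaussianReal 0 1).real (Set.Iic 0) = (gaussianReal 0 1).real (Set.Iio 0) :=
    measureReal_congr Iio_ae_eq_Iic.symm
  have h3 := probReal_compl_eq_one_sub (μ := gaussianReal 0 1) (s := Set.Ioi 0) measurableSet_Ioi
  rw [Set.compl_Ioi] at h3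
  linarith

/-- The normalised binomial variable. -/
noncomputable def normalised (p : ℝ) (n k : ℕ) : ℝ :=
  (√(n : ℝ))⁻¹ * ((k - n * p) / √(p * (1 - p)))

open MeasureTheory ProbabilityTheory in
lemma charFun_bin (P : unitInterval) (n : ℕ) (t : ℝ) :
    charFun ((binomial n P).map (normalised P n)) t =
      (charFun ((binomial 1 P).map (fun k : ℕ => ((k : ℝ) - P) / √((P : ℝ) * (1 - P))))
        ((√(n : ℝ))⁻¹ * t)) ^ n := by
  rw [charFun_apply_real, charFun_apply_real,
    integral_map (by fun_prop) (by fun_prop), integral_map (by fun_prop) (by fun_prop),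
    integral_binomial, integral_binomial]
  have h1 : Finset.Iic 1 = Finset.range 2 := by ext; simp only [Finset.mem_Iic, Finset.mem_range]; omega
  have hn : Finset.Iic n = Finset.range (n + 1) := by ext; simp only [Finset.mem_Iic, Finset.mem_range]; omega
  rw [h1, hn, Finset.sum_range_succ _ 1, Finset.sum_range_one]
  rw [add_comm (_ : ℂ), add_pow]
  refine Finset.sum_congr rfl fun k hk => ?_
  have hk' : k ≤ n := by simp at hk; omega
  obtain ⟨m, rfl⟩ := Nat.exists_eq_add_of_le hk'
  simp only [normalised, Complex.real_smul, Nat.add_sub_cancel_left]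
  push_cast
  simp only [Nat.choose_self, Nat.choose_zero_right, Nat.cast_one, pow_zero, pow_one, mul_one,
    one_mul, Nat.sub_zero, Nat.sub_self, mul_pow, ← Complex.exp_nat_mul]
  have e : ∀ A B C a b c d : ℂ, a = c + d → A * B * C * Complex.exp a =
      B * Complex.exp c * (C * Complex.exp d) * A := by
    intro A B C a b c d h
    rw [h, Complex.exp_add]; ring
  apply e
  · exact 0
  · push_cast
    ring

open MeasureTheory ProbabilityTheory in
lemma clt_bin (p : ℝ) (hp0 : 0 < p) (hp1 : p < 1) :
    Tendsto (fun n => (binomial n ⟨p, hp0.le, hp1.le⟩).real {k | 0 < normalised p n k}) atTop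
      (nhds (1 / 2)) := by
  set P : unitInterval := ⟨p, hp0.le, hp1.le⟩ with hP
  have hPp : (P : ℝ) = p := rfl
  have hv : 0 < p * (1 - p) := mul_pos hp0 (by linarith)
  have hs : 0 < √(p * (1 - p)) := Real.sqrt_pos.2 hv
  let μs : ℕ → ProbabilityMeasure ℝ := fun n =>
    ⟨(binomial n P).map (normalised p n), Measure.isProbabilityMeasure_map (by fun_prop)⟩
  let μ0 : ProbabilityMeasure ℝ := ⟨gaussianReal 0 1, inferInstance⟩
  have h1 : Finset.Iic 1 = Finset.range 2 := by ext; simp only [Finset.mem_Iic, Finset.mem_range]; omega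
  have hlim : Tendsto μs atTop (nhds μ0) := by
    rw [ProbabilityMeasure.tendsto_iff_tendsto_charFun]
    intro t
    have key := tendsto_charFun_inv_sqrt_mul_pow (P := binomial 1 P)
      (X := fun k : ℕ => ((k : ℝ) - P) / √((P : ℝ) * (1 - P))) (by fun_prop) ?_ ?_ t
    · have e : charFun (μ0 : Measure ℝ) t = Complex.exp (-t ^ 2 / 2) := by
        change charFun (gaussianReal 0 1) t = _
        rw [charFun_gaussianReal]
        congr 1
        push_cast
        ring
      rw [e]
      refine key.congr fun n => ?_
      exact (charFun_bin P n t).symm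
    · rw [integral_binomial, h1, Finset.sum_range_succ, Finset.sum_range_one]
      simp [hPp]
      ring
    · rw [integral_binomial, h1, Finset.sum_range_succ, Finset.sum_range_one]
      simp only [Pi.pow_apply, div_pow, hPp, Real.sq_sqrt hv.le]
      simp
      have : 1 - p ≠ 0 := by linarith
      field_simp
      ring
  have : NullSingletonClass (gaussianReal 0 1) := nullSingletonClass_gaussianReal (by simp)
  have hfr : μ0 (frontier (Set.Ioi (0 : ℝ))) = 0 := by
    rw [frontier_Ioi]
    simp [μ0, ProbabilityMeasure.mk_apply]
  have := ProbabilityMeasure.tendsto_measure_of_null_frontier_of_tendsto hlim hfr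
  have h2 := (NNReal.tendsto_coe.2 this)
  have h3 : ((μ0 (Set.Ioi (0 : ℝ)) : NNReal) : ℝ) = 1 / 2 := gauss_half
  rw [h3] at h2
  refine h2.congr fun n => ?_
  change ((binomial n P).map (normalised p n)).real (Set.Ioi 0) = _
  rw [map_measureReal_apply (by fun_prop) measurableSet_Ioi]
  rfl

/-- Binomial weight. -/
noncomputable def wt (p : ℝ) (n k : ℕ) : ℝ := (n.choose k : ℝ) * p^k * (1 - p)^(n-k)

lemma wt_nonneg (p : ℝ) (hp0 : 0 < p) (hp1 : p < 1) (n k : ℕ) : 0 ≤ wt p n k := by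
  have : 0 < 1 - p := by linarith
  unfold wt
  positivity

lemma wt_sum (p : ℝ) (n : ℕ) : ∑ k ∈ Finset.range (n + 1), wt p n k = 1 := by
  have h := add_pow p (1 - p) n
  rw [add_sub_cancel, one_pow] at h
  rw [h]
  refine Finset.sum_congr rfl fun k _ => ?_
  unfold wt
  ring

lemma cheb (p : ℝ) (hp0 : 0 < p) (hp1 : p < 1) (δ : ℝ) (hδ : 0 < δ) (n : ℕ) (hn : n ≠ 0)
    (T : Finset ℕ) (hT : T ⊆ Finset.range (n + 1)) (hTδ : ∀ k ∈ T, δ ≤ |p - k / n|) :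
    ∑ k ∈ T, wt p n k ≤ p * (1 - p) / δ ^ 2 / n := by
  have hv := bernstein.variance hn ⟨p, hp0.le, hp1.le⟩
  have hv' : ∑ k ∈ Finset.range (n + 1), (p - k / n) ^ 2 * wt p n k = p * (1 - p) / n := by
    rw [← hv, Finset.sum_range]
    refine Finset.sum_congr rfl fun k _ => ?_
    rw [bernstein_apply]
    rfl
  have h1 : δ ^ 2 * ∑ k ∈ T, wt p n k ≤ p * (1 - p) / n := by
    rw [← hv', Finset.mul_sum]
    refine le_trans (Finset.sum_le_sum fun k hk => ?_)
      (Finset.sum_le_sum_of_subset_of_nonneg hT fun k _ _ =>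
        mul_nonneg (sq_nonneg _) (wt_nonneg p hp0 hp1 n k))
    refine mul_le_mul_of_nonneg_right ?_ (wt_nonneg p hp0 hp1 n k)
    rw [← sq_abs (p - k / n)]
    exact pow_le_pow_left₀ hδ.le (hTδ k hk) 2
  rw [div_right_comm, le_div_iff₀ (by positivity)]
  linarith

lemma cheb_tendsto (p : ℝ) (hp0 : 0 < p) (hp1 : p < 1) (δ : ℝ) (hδ : 0 < δ)
    (T : ℕ → Finset ℕ) (hT : ∀ n, T n ⊆ Finset.range (n + 1))
    (hTδ : ∀ n, n ≠ 0 → ∀ k ∈ T n, δ ≤ |p - k / n|) :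
    Tendsto (fun n => ∑ k ∈ T n, wt p n k) atTop (nhds 0) := by
  refine tendsto_of_tendsto_of_tendsto_of_le_of_le' tendsto_const_nhds
    (tendsto_const_div_atTop_nhds_zero_nat (p * (1 - p) / δ ^ 2)) ?_ ?_
  · exact Eventually.of_forall fun n => Finset.sum_nonneg fun k _ => wt_nonneg p hp0 hp1 n k
  · filter_upwards [eventually_ne_atTop 0] with n hn
    exact cheb p hp0 hp1 δ hδ n hn (T n) (hT n) (hTδ n hn)

theorem winning_prob_threshold_biased (u d p : ℝ)
    (hp0 : 0 < p) (hp1 : p < 1)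
    (hd0 : 0 < d) (hd1 : d ≤ 1) (hu : 1 ≤ u) (hne : u ≠ d) :
    (u ^ p * d ^ (1 - p) < 1 → Tendsto (fun n : ℕ => B n u d p) atTop (nhds 0)) ∧
    (u ^ p * d ^ (1 - p) = 1 → Tendsto (fun n : ℕ => B n u d p) atTop (nhds 1)) ∧
    (1 < u ^ p * d ^ (1 - p) → Tendsto (fun n : ℕ => B n u d p) atTop (nhds 2)) := by
  set L := Real.log (u / d) with hL
  have hu0 : 0 < u := by linarith
  have hud : d < u := lt_of_le_of_ne (hd1.trans hu) hne.symm
  have hLpos : 0 < L := Real.log_pos (by rw [lt_div_iff₀ hd0]; linarith)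
  have hLeq : L = Real.log u - Real.log d := Real.log_div hu0.ne' hd0.ne'
  set c := Real.log (1 / d) / L with hc
  have hc0 : 0 ≤ c := div_nonneg (Real.log_nonneg (by rw [le_div_iff₀ hd0]; linarith)) hLpos.le
  have hcL : c * L = - Real.log d := by
    rw [hc, div_mul_cancel₀ _ hLpos.ne', one_div, Real.log_inv]
  have hmem : ∀ n k : ℕ, k ∈ Finset.Icc (ktilde n u d + 1) n ↔
      k ∈ Finset.range (n + 1) ∧ (n : ℝ) * c < k := by
    intro n k
    have : ktilde n u d = ⌊(n : ℝ) * c⌋₊ := by rw [ktilde, hc, mul_div_assoc]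
    rw [this, Finset.mem_Icc, Nat.succ_le_iff, Nat.floor_lt (by positivity), Finset.mem_range,
      Nat.lt_succ_iff, and_comm]
  have hB : ∀ n : ℕ, B n u d p = 2 * ∑ k ∈ Finset.Icc (ktilde n u d + 1) n, wt p n k :=
    fun n => rfl
  set S := p * Real.log u + (1 - p) * Real.log d with hS
  have hexp : u ^ p * d ^ (1 - p) = Real.exp S := by
    rw [Real.rpow_def_of_pos hu0, Real.rpow_def_of_pos hd0, ← Real.exp_add, hS]
    ring_nf
  have hcp : (p - c) * L = S := by
    rw [sub_mul, hcL, hLeq, hS]; ring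
  rw [hexp]
  refine ⟨fun h => ?_, fun h => ?_, fun h => ?_⟩
  · rw [Real.exp_lt_one_iff] at h
    have hlt : p < c := by nlinarith
    have := cheb_tendsto p hp0 hp1 (c - p) (by linarith)
      (fun n => Finset.Icc (ktilde n u d + 1) n)
      (fun n k hk => ((hmem n k).1 hk).1) (fun n hn k hk => by
        have h2 := ((hmem n k).1 hk).2
        have hn' : (0 : ℝ) < n := by positivity
        have : c < k / n := by rw [lt_div_iff₀ hn']; linarith
        rw [abs_sub_comm]
        exact le_trans (by linarith) (le_abs_self _))
    simpa [hB] using this.const_mul 2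
  · rw [Real.exp_eq_one_iff] at h
    have hpc : c = p := by
      rw [h] at hcp
      rcases mul_eq_zero.1 hcp with h | h <;> linarith
    have hclt := (clt_bin p hp0 hp1).const_mul 2
    have e : (2 : ℝ) * (1 / 2) = 1 := by norm_num
    rw [e] at hclt
    refine hclt.congr' ?_
    filter_upwards [eventually_ne_atTop 0] with n hn
    rw [hB]
    congr 1
    have hn' : (0 : ℝ) < n := by positivity
    have hs : 0 < √(p * (1 - p)) := Real.sqrt_pos.2 (mul_pos hp0 (by linarith))
    have hset : ∀ k : ℕ, 0 < normalised p n k ↔ (n : ℝ) * c < k := by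
      intro k
      have hsn : 0 < (√(n : ℝ))⁻¹ := inv_pos.2 (Real.sqrt_pos.2 hn')
      rw [normalised, mul_pos_iff_of_pos_left hsn, div_pos_iff_of_pos_right hs, sub_pos, hpc]
    have hI : Finset.Icc (ktilde n u d + 1) n =
        (Finset.Iic n).filter (fun k => 0 < normalised p n k) := by
      ext k
      rw [hmem, Finset.mem_filter, hset, Finset.mem_range, Finset.mem_Iic, Nat.lt_succ_iff]
    rw [hI, Finset.sum_filter, ← MeasureTheory.integral_indicator_one (MeasurableSet.of_discrete),
      ProbabilityTheory.integral_binomial]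
    refine Finset.sum_congr rfl fun k _ => ?_
    simp [Set.indicator_apply, wt]
  · rw [Real.one_lt_exp_iff] at h
    have hlt : c < p := by
      by_contra hcon
      push Not at hcon
      nlinarith
    have := cheb_tendsto p hp0 hp1 (p - c) (by linarith)
      (fun n => Finset.range (n + 1) \ Finset.Icc (ktilde n u d + 1) n)
      (fun n => Finset.sdiff_subset) (fun n hn k hk => by
        rw [Finset.mem_sdiff, hmem] at hk
        have h2 : (k : ℝ) ≤ n * c := by
          by_contra hcon
          exact hk.2 ⟨hk.1, not_le.1 hcon⟩
        have hn' : (0 : ℝ) < n := by positivity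
        have : (k : ℝ) / n ≤ c := by rw [div_le_iff₀ hn']; linarith
        exact le_trans (by linarith) (le_abs_self _))
    have h3 := (this.const_sub 1).const_mul 2
    rw [sub_zero, mul_one] at h3
    refine h3.congr fun n => ?_
    rw [hB, ← wt_sum p n, ← Finset.sum_sdiff (s₁ := Finset.Icc (ktilde n u d + 1) n)
      (s₂ := Finset.range (n + 1)) (fun k hk => ((hmem n k).1 hk).1)]
    ring
end

section
/- Let $p \in (0,1)$, $q = 1-p$, $0 < d \le 1 \le u$ with $u \ne d$, $\tilde{k}_0(n,u,d) = \lfloor n \ln(1/d)/\ln(u/d) \rfloor$, and define the expected net profit $G(n,u,d,p) = -1 + \sum_{k=0}^{\tilde{k}_0(n,u,d)} \binom{n}{k} (pu)^k (qd)^{n-k} + 2 \sum_{k=\tilde{k}_0(n,u,d)+1}^{n} \binom{n}{k} p^k q^{n-k}$. Then as $n \to \infty$, $G(n,u,d,p)$ converges to $1$ if $u^p d^q > 1$, to $0$ if $u^p d^q = 1$, and to $-1$ if $u^p d^q < 1$. -/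
open Filter

/-- Expected net profit (for stake 1) after `n` rounds with heads probability `p`. -/
noncomputable def G (n : ℕ) (u d p : ℝ) : ℝ :=
  -1 + ∑ k ∈ Finset.range (ktilde n u d + 1), (n.choose k : ℝ) * (p * u)^k * ((1 - p) * d)^(n-k)
    + 2 * ∑ k ∈ Finset.Icc (ktilde n u d + 1) n, (n.choose k : ℝ) * p^k * (1 - p)^(n-k)

section helpers

open MeasureTheory ProbabilityTheory Topology unitInterval

/-- Distribution function of the normalised binomial variable. -/
noncomputable def Fcdf (P : I) (n : ℕ) (x : ℝ) : ℝ :=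
  (binomial n P).real {k : ℕ | (√(n:ℝ))⁻¹ * ((√((P:ℝ) * (1 - P)))⁻¹ * ((k:ℝ) - n * P)) ≤ x}

lemma Fcdf_tendsto (P : I) (hp0 : 0 < (P:ℝ)) (hp1 : (P:ℝ) < 1) (x : ℝ) :
    Tendsto (fun n : ℕ => Fcdf P n x) atTop (𝓝 ((gaussianReal 0 1).real (Set.Iic x))) := by
  set p : ℝ := (P:ℝ) with hp
  set s : ℝ := √(p * (1 - p)) with hs
  have hpq : 0 < p * (1 - p) := mul_pos hp0 (by linarith)
  have hs0 : 0 < s := Real.sqrt_pos.2 hpq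
  have hs2 : s ^ 2 = p * (1 - p) := Real.sq_sqrt hpq.le
  let X : ℕ → ℝ := fun k => s⁻¹ * ((k:ℝ) - p)
  let Z : (n : ℕ) → ℕ → ℝ := fun n k => (√(n:ℝ))⁻¹ * (s⁻¹ * ((k:ℝ) - n * p))
  have h0 : (binomial 1 P)[X] = 0 := by
    rw [integral_binomial]
    have : Finset.Iic 1 = ({0, 1} : Finset ℕ) := rfl
    simp [this, X, ← hp]
    ring
  have h1 : (binomial 1 P)[X ^ 2] = 1 := by
    rw [integral_binomial]
    have : Finset.Iic 1 = ({0, 1} : Finset ℕ) := rfl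
    simp [this, X, ← hp, mul_pow, hs2]
    have : 1 - p ≠ 0 := by linarith
    field_simp
    ring
  have hchar : ∀ (n : ℕ) (t : ℝ), charFun ((binomial n P).map (Z n)) t =
      (charFun ((binomial 1 P).map X) ((√(n:ℝ))⁻¹ * t)) ^ n := by
    intro n t
    rw [charFun_apply_real, charFun_apply_real, integral_map (by fun_prop) (by fun_prop),
      integral_map (by fun_prop) (by fun_prop), integral_binomial, integral_binomial]
    have : Finset.Iic 1 = ({0, 1} : Finset ℕ) := rfl
    have h2 : Finset.Iic n = Finset.range (n+1) := by ext; simp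
    rw [this, h2, Finset.sum_pair (by norm_num), add_comm (_ • _), add_pow]
    refine Finset.sum_congr rfl fun k hk => ?_
    have hk' : k ≤ n := by simp at hk; omega
    simp only [Complex.real_smul, mul_pow, ← Complex.exp_nat_mul]
    push_cast
    have e : ∀ a b c A B C : ℂ, C = A * B → a * b * c * C = (b * A) * (c * B) * a := by
      intro a b c A B C h; rw [h]; ring
    simp only [← hp, Nat.choose_self, Nat.choose_zero_right, Nat.cast_one, pow_one, pow_zero,
      one_mul, mul_one]
    apply e
    rw [← Complex.exp_add]
    congr 1
    simp only [Z, X]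
    push_cast [Nat.cast_sub hk']
    ring
  let μ : ℕ → ProbabilityMeasure ℝ := fun n =>
    ⟨(binomial n P).map (Z n), Measure.isProbabilityMeasure_map (by fun_prop)⟩
  let μ₀ : ProbabilityMeasure ℝ := ⟨gaussianReal 0 1, inferInstance⟩
  have hlim : Tendsto μ atTop (𝓝 μ₀) := by
    refine ProbabilityMeasure.tendsto_iff_tendsto_charFun.2 fun t => ?_
    have := tendsto_charFun_inv_sqrt_mul_pow (P := binomial 1 P) (X := X) (by fun_prop) h0 h1 t
    simp only [← hchar] at this
    simpa [μ, μ₀, charFun_gaussianReal, neg_div] using this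
  have hfr : (μ₀ : Measure ℝ) (frontier (Set.Iic x)) = 0 := by
    rw [frontier_Iic]
    have : NullSingletonClass (gaussianReal 0 1) := nullSingletonClass_gaussianReal (by norm_num)
    simp [μ₀]
  have h := ProbabilityMeasure.tendsto_measure_of_null_frontier_of_tendsto' hlim hfr
  have h' := (ENNReal.tendsto_toReal (measure_ne_top (μ₀ : Measure ℝ) _)).comp h
  refine h'.congr fun n => ?_
  simp only [Function.comp, μ, ProbabilityMeasure.coe_mk]
  rw [Measure.map_apply (by fun_prop) measurableSet_Iic]
  rfl

lemma Fcdf_mono (P : I) (n : ℕ) : Monotone (Fcdf P n) := by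
  intro x y hxy
  exact measureReal_mono (fun k hk => le_trans hk hxy)

lemma Fcdf_nonneg (P : I) (n : ℕ) (x : ℝ) : 0 ≤ Fcdf P n x := measureReal_nonneg

lemma Fcdf_le_one (P : I) (n : ℕ) (x : ℝ) : Fcdf P n x ≤ 1 := measureReal_le_one

lemma gauss_cdf_bot : Tendsto (fun x => (gaussianReal 0 1).real (Set.Iic x)) atBot (𝓝 0) := by
  simpa [← ProbabilityTheory.cdf_eq_real] using tendsto_cdf_atBot (gaussianReal 0 1)

lemma gauss_cdf_top : Tendsto (fun x => (gaussianReal 0 1).real (Set.Iic x)) atTop (𝓝 1) := by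
  simpa [← ProbabilityTheory.cdf_eq_real] using tendsto_cdf_atTop (gaussianReal 0 1)

lemma Fcdf_bot (P : I) (hp0 : 0 < (P:ℝ)) (hp1 : (P:ℝ) < 1) (x : ℕ → ℝ)
    (hx : Tendsto x atTop atBot) : Tendsto (fun n => Fcdf P n (x n)) atTop (𝓝 0) := by
  refine tendsto_order.2 ⟨fun a ha => .of_forall fun n => ha.trans_le (Fcdf_nonneg _ _ _),
    fun a ha => ?_⟩
  obtain ⟨M, hM⟩ := (gauss_cdf_bot.eventually_lt_const ha).exists
  filter_upwards [(Fcdf_tendsto P hp0 hp1 M).eventually_lt_const hM, hx.eventually_le_atBot M]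
    with n h1 h2
  exact (Fcdf_mono P n h2).trans_lt h1

lemma Fcdf_top (P : I) (hp0 : 0 < (P:ℝ)) (hp1 : (P:ℝ) < 1) (x : ℕ → ℝ)
    (hx : Tendsto x atTop atTop) : Tendsto (fun n => Fcdf P n (x n)) atTop (𝓝 1) := by
  refine tendsto_order.2 ⟨fun a ha => ?_,
    fun a ha => .of_forall fun n => (Fcdf_le_one _ _ _).trans_lt ha⟩
  obtain ⟨M, hM⟩ := (gauss_cdf_top.eventually_const_lt ha).exists
  filter_upwards [(Fcdf_tendsto P hp0 hp1 M).eventually_const_lt hM, hx.eventually_ge_atTop M]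
    with n h1 h2
  exact h1.trans_le (Fcdf_mono P n h2)

lemma gauss_zero : (gaussianReal 0 1).real (Set.Iic 0) = 1 / 2 := by
  have : NullSingletonClass (gaussianReal 0 1) := nullSingletonClass_gaussianReal (by norm_num)
  have h1 : (gaussianReal 0 1).real (Set.Iic 0) = (gaussianReal 0 1).real (Set.Ici 0) := by
    have h := gaussianReal_map_neg (μ := 0) (v := 1)
    rw [neg_zero] at h
    conv_lhs => rw [← h]
    rw [map_measureReal_apply (by fun_prop) measurableSet_Iic]
    congr 1
    ext; simp
  have h2 : (gaussianReal 0 1).real (Set.Ici 0) = (gaussianReal 0 1).real (Set.Ioi 0) :=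
    measureReal_congr Ioi_ae_eq_Ici.symm
  have h3 := probReal_compl_eq_one_sub (μ := gaussianReal 0 1) (measurableSet_Iic (a := (0:ℝ)))
  rw [Set.compl_Iic] at h3
  linarith

lemma gauss_small (e : ℝ) (he : 0 < e) : ∃ r > 0,
    (gaussianReal 0 1).real (Set.Iic 0) - (gaussianReal 0 1).real (Set.Iic (-r)) < e := by
  have : NullSingletonClass (gaussianReal 0 1) := nullSingletonClass_gaussianReal (by norm_num)
  have h : Tendsto (fun m : ℕ => (gaussianReal 0 1) (Set.Iic (-(1 / ((m:ℝ) + 1))))) atTop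
      (𝓝 ((gaussianReal 0 1) (⋃ m : ℕ, Set.Iic (-(1 / ((m:ℝ) + 1)))))) := by
    apply tendsto_measure_iUnion_atTop
    intro a b hab
    apply Set.Iic_subset_Iic.2
    have := Nat.one_div_le_one_div (α := ℝ) hab
    linarith
  have hU : (⋃ m : ℕ, Set.Iic (-(1 / ((m:ℝ) + 1)))) = Set.Iio 0 := by
    ext y
    simp only [Set.mem_iUnion, Set.mem_Iic, Set.mem_Iio]
    constructor
    · rintro ⟨m, hm⟩
      have : 0 < 1 / ((m:ℝ) + 1) := by positivity
      linarith
    · intro hy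
      obtain ⟨m, hm⟩ := exists_nat_one_div_lt (neg_pos.2 hy)
      exact ⟨m, by linarith⟩
  rw [hU, measure_congr (Iio_ae_eq_Iic (μ := gaussianReal 0 1) (a := (0:ℝ)))] at h
  have h' := (ENNReal.tendsto_toReal (measure_ne_top (gaussianReal 0 1) _)).comp h
  have h'' : (gaussianReal 0 1).real (Set.Iic 0) - e < ((gaussianReal 0 1) (Set.Iic 0)).toReal := by
    simp only [Measure.real]; linarith
  obtain ⟨m, hm⟩ := (h'.eventually_const_lt h'').exists
  refine ⟨1 / ((m:ℝ)+1), by positivity, ?_⟩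
  simp only [Function.comp] at hm
  simp only [Measure.real] at hm ⊢
  linarith

/-- The two sums in `G` as binomial integrals. -/
lemma sum_two (P : I) (n K : ℕ) :
    ∑ k ∈ Finset.Icc (K + 1) n, (n.choose k : ℝ) * (P:ℝ)^k * (1 - P)^(n-k)
      = 1 - (binomial n P).real {k : ℕ | k ≤ K} := by
  rw [← probReal_compl_eq_one_sub (by measurability), ← integral_indicator_one (by measurability),
    integral_binomial]
  simp only [Set.indicator_apply, smul_eq_mul, mul_ite, Pi.one_apply, mul_one, mul_zero]
  rw [← Finset.sum_filter]
  apply Finset.sum_congr _ (fun _ _ => rfl)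
  ext k; simp; try omega

lemma sum_one (P : I) (n K : ℕ) (f : ℕ → ℝ) :
    ∑ k ∈ Finset.range (K + 1), (n.choose k : ℝ) * (P:ℝ)^k * (1 - P)^(n-k) * f k
      = ∑ k ∈ Finset.Iic n, (n.choose k : ℝ) * (P:ℝ)^k * (1 - P)^(n-k) *
        (if k ≤ K then f k else 0) := by
  simp only [mul_ite, mul_zero]
  rw [← Finset.sum_filter]
  symm
  apply Finset.sum_subset
  · intro k; simp; try omega
  · intro k hk hk'
    simp at hk hk'
    have : n < k := by by_contra h; exact absurd (hk' (by omega)) (by omega)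
    simp [Nat.choose_eq_zero_of_lt this]

lemma Fcdf_eq_sum (P : I) (n : ℕ) (y : ℝ) :
    Fcdf P n y = ∑ k ∈ Finset.Iic n, (n.choose k : ℝ) * (P:ℝ)^k * (1 - P)^(n-k) *
      (if (√(n:ℝ))⁻¹ * ((√((P:ℝ) * (1 - P)))⁻¹ * ((k:ℝ) - n * P)) ≤ y then 1 else 0) := by
  rw [Fcdf, ← integral_indicator_one (by measurability), integral_binomial]
  simp only [Set.indicator_apply, smul_eq_mul, Pi.one_apply, Set.mem_ofPred_eq]

lemma sum_binom_one (P : I) (n : ℕ) :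
    ∑ k ∈ Finset.Iic n, (n.choose k : ℝ) * (P:ℝ)^k * (1 - P)^(n-k) = 1 := by
  have := integral_binomial (n := n) (p := P) (fun _ => (1:ℝ))
  simpa using this.symm

lemma G_tendsto (P : I) (u d : ℝ) (hp0 : 0 < (P:ℝ)) (hp1 : (P:ℝ) < 1)
    (hd0 : 0 < d) (hd1 : d ≤ 1) (hu : 1 ≤ u) (hne : u ≠ d) (c L : ℝ)
    (hc : c = Real.log (1/d) / Real.log (u/d)) (x : ℕ → ℝ)
    (hx : ∀ n : ℕ, x n = (√(n:ℝ))⁻¹ * ((√((P:ℝ) * (1 - P)))⁻¹ * ((n:ℝ) * c - n * P)))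
    (hL : Tendsto (fun n => Fcdf P n (x n)) atTop (𝓝 L))
    (hr : ∀ e > 0, ∃ r > 0, ∀ᶠ n in atTop, Fcdf P n (x n) - Fcdf P n (x n - r) < e) :
    Tendsto (fun n : ℕ => G n u d P) atTop (𝓝 (1 - 2 * L)) := by
  set s : ℝ := √((P:ℝ) * (1 - P)) with hs
  have hs0 : 0 < s := Real.sqrt_pos.2 (mul_pos hp0 (by linarith))
  have hu0 : 0 < u := by linarith
  have hdu : d < u := lt_of_le_of_ne (hd1.trans hu) (Ne.symm hne)
  set Λ : ℝ := Real.log (u/d) with hΛ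
  have hΛ0 : 0 < Λ := Real.log_pos ((one_lt_div hd0).2 hdu)
  have hΛe : Λ = Real.log u - Real.log d := Real.log_div hu0.ne' hd0.ne'
  have hcΛ : Λ * c = - Real.log d := by
    rw [hc, one_div, Real.log_inv]; field_simp
  have hc0 : 0 ≤ c := by
    rw [hc]; exact div_nonneg (Real.log_nonneg ((one_le_div hd0).2 hd1)) hΛ0.le
  have hK : ∀ n k : ℕ, k ≤ ktilde n u d ↔ (k:ℝ) ≤ n * c := by
    intro n k
    rw [ktilde, mul_div_assoc, ← hc, Nat.le_floor_iff (by positivity)]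
  have hZ : ∀ n : ℕ, 1 ≤ n → ∀ y : ℝ, ∀ k : ℕ,
      (√(n:ℝ))⁻¹ * (s⁻¹ * ((k:ℝ) - n * P)) ≤ x n - y ↔ (k:ℝ) ≤ n * c - y * s * √(n:ℝ) := by
    intro n hn y k
    have hn0 : 0 < √(n:ℝ) := Real.sqrt_pos.2 (by exact_mod_cast hn)
    rw [hx n, ← mul_le_mul_iff_right₀ (mul_pos hs0 hn0)]
    have e1 : s * √(n:ℝ) * ((√(n:ℝ))⁻¹ * (s⁻¹ * ((k:ℝ) - n * P))) = (k:ℝ) - n * P := by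
      field_simp
    have e2 : s * √(n:ℝ) * ((√(n:ℝ))⁻¹ * (s⁻¹ * ((n:ℝ) * c - n * P)) - y)
        = n * c - n * P - y * s * √(n:ℝ) := by
      field_simp
    rw [e1, e2]
    constructor <;> intro h <;> linarith
  have hZ0 : ∀ n : ℕ, 1 ≤ n → ∀ k : ℕ,
      (√(n:ℝ))⁻¹ * (s⁻¹ * ((k:ℝ) - n * P)) ≤ x n ↔ (k:ℝ) ≤ n * c := by
    intro n hn k
    simpa using hZ n hn 0 k
  have hw : ∀ n k : ℕ, k ≤ n → u ^ k * d ^ (n - k) = Real.exp (Λ * (k - n * c)) := by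
    intro n k hk
    rw [← Real.exp_log hu0, ← Real.exp_log hd0, ← Real.exp_nat_mul, ← Real.exp_nat_mul,
      ← Real.exp_add, Nat.cast_sub hk]
    congr 1
    have : Λ * (k - n * c) = Λ * k - n * (Λ * c) := by ring
    rw [this, hcΛ, hΛe]
    try simp only [Real.log_exp]
    ring
  let S : ℕ → ℝ := fun n => ∑ k ∈ Finset.Iic n, (n.choose k : ℝ) * (P:ℝ)^k * (1 - P)^(n-k) *
        (if k ≤ ktilde n u d then u ^ k * d ^ (n - k) else 0)
  have hb : ∀ n k : ℕ, 0 ≤ (n.choose k : ℝ) * (P:ℝ)^k * (1 - P)^(n-k) := by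
    intro n k
    have : (0:ℝ) ≤ 1 - P := by linarith
    positivity
  have hG : ∀ n : ℕ, 1 ≤ n → -1 + S n + 2 * (1 - Fcdf P n (x n)) = G n u d P := by
    intro n hn
    rw [G, sum_two]
    have h1 : Fcdf P n (x n) = (binomial n P).real {k : ℕ | k ≤ ktilde n u d} := by
      rw [Fcdf]
      congr 1
      ext k
      simp only [Set.mem_ofPred_eq, hK]
      exact hZ0 n hn k
    rw [h1]
    congr 2
    simp only [S]
    rw [← sum_one]
    refine Finset.sum_congr rfl fun k _ => ?_
    rw [mul_pow, mul_pow]; ring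
  have hS0 : ∀ n, 0 ≤ S n := by
    intro n
    refine Finset.sum_nonneg fun k _ => mul_nonneg (hb n k) ?_
    split_ifs <;> positivity
  have hSle : ∀ n : ℕ, 1 ≤ n → ∀ r > 0, S n ≤ Fcdf P n (x n) - Fcdf P n (x n - r)
      + Real.exp (-(Λ * (r * s)) * √(n:ℝ)) := by
    intro n hn r hr0
    have hexp1 : Real.exp (-(Λ * (r * s)) * √(n:ℝ)) = ∑ k ∈ Finset.Iic n,
        Real.exp (-(Λ * (r * s)) * √(n:ℝ)) * ((n.choose k : ℝ) * (P:ℝ)^k * (1 - P)^(n-k)) := by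
      rw [← Finset.mul_sum, sum_binom_one, mul_one]
    rw [Fcdf_eq_sum, Fcdf_eq_sum, hexp1, ← Finset.sum_sub_distrib, ← Finset.sum_add_distrib]
    refine Finset.sum_le_sum fun k hk => ?_
    rw [mul_comm (Real.exp _), ← mul_sub, ← mul_add]
    refine mul_le_mul_of_nonneg_left ?_ (hb n k)
    simp only [hK, ← hs, hZ0 n hn, hZ n hn]
    rw [hw n k (by simpa using hk)]
    have hrs : 0 ≤ r * s * √(n:ℝ) := by positivity
    have hexp := Real.exp_pos (-(Λ * (r * s)) * √(n:ℝ))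
    by_cases h1 : (k:ℝ) ≤ n * c
    · by_cases h2 : (k:ℝ) ≤ n * c - r * s * √(n:ℝ)
      · simp only [h1, h2, if_true, sub_self, zero_add]
        apply Real.exp_le_exp.2
        nlinarith
      · simp only [h1, h2, if_true, if_false]
        have : Real.exp (Λ * (k - n * c)) ≤ 1 := Real.exp_le_one_iff.2 (by nlinarith)
        linarith
    · have h2 : ¬ (k:ℝ) ≤ n * c - r * s * √(n:ℝ) := by
        intro h; apply h1; linarith
      simp only [h1, h2, if_false]
      linarith
  have hS : Tendsto S atTop (𝓝 0) := by
    refine tendsto_order.2 ⟨fun a ha => .of_forall fun n => ha.trans_le (hS0 n), fun a ha => ?_⟩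
    obtain ⟨r, hr0, hr1⟩ := hr (a/2) (by linarith)
    have he : Tendsto (fun n : ℕ => Real.exp (-(Λ * (r * s)) * √(n:ℝ))) atTop (𝓝 0) := by
      apply Real.tendsto_exp_atBot.comp
      apply Tendsto.const_mul_atTop_of_neg (by simp only [neg_lt_zero]; positivity)
      exact Real.tendsto_sqrt_atTop.comp tendsto_natCast_atTop_atTop
    filter_upwards [hr1, he.eventually_lt_const (half_pos ha), eventually_ge_atTop 1] with n h1 h2 h3
    linarith [hSle n h3 r hr0]
  have hfin : Tendsto (fun n => -1 + S n + 2 * (1 - Fcdf P n (x n))) atTop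
      (𝓝 (-1 + 0 + 2 * (1 - L))) := (hS.const_add _).add ((hL.const_sub _).const_mul _)
  have e : -1 + 0 + 2 * (1 - L) = 1 - 2 * L := by ring
  rw [e] at hfin
  refine hfin.congr' ?_
  filter_upwards [eventually_ge_atTop 1] with n hn using hG n hn

end helpers

theorem expected_net_profit_threshold_biased (u d p : ℝ)
    (hp0 : 0 < p) (hp1 : p < 1)
    (hd0 : 0 < d) (hd1 : d ≤ 1) (hu : 1 ≤ u) (hne : u ≠ d) :
    (1 < u ^ p * d ^ (1 - p) → Tendsto (fun n : ℕ => G n u d p) atTop (nhds 1)) ∧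
    (u ^ p * d ^ (1 - p) = 1 → Tendsto (fun n : ℕ => G n u d p) atTop (nhds 0)) ∧
    (u ^ p * d ^ (1 - p) < 1 → Tendsto (fun n : ℕ => G n u d p) atTop (nhds (-1))) := by
  set P : unitInterval := ⟨p, hp0.le, hp1.le⟩ with hP
  have hPp : (P : ℝ) = p := rfl
  have hu0 : 0 < u := by linarith
  have hdu : d < u := lt_of_le_of_ne (hd1.trans hu) (Ne.symm hne)
  set Λ : ℝ := Real.log (u/d) with hΛ
  have hΛ0 : 0 < Λ := Real.log_pos ((one_lt_div hd0).2 hdu)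
  have hΛe : Λ = Real.log u - Real.log d := Real.log_div hu0.ne' hd0.ne'
  obtain ⟨c, hc⟩ : ∃ c, c = Real.log (1/d) / Real.log (u/d) := ⟨_, rfl⟩
  have hcΛ : Λ * c = - Real.log d := by
    rw [hc, ← hΛ, one_div, Real.log_inv]; field_simp
  have hv : u ^ p * d ^ (1 - p) = Real.exp (Λ * (p - c)) := by
    rw [Real.rpow_def_of_pos hu0, Real.rpow_def_of_pos hd0, ← Real.exp_add, mul_sub Λ, hcΛ, hΛe]
    congr 1; ring
  set s : ℝ := √(p * (1 - p)) with hs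
  have hs0 : 0 < s := Real.sqrt_pos.2 (mul_pos hp0 (by linarith))
  obtain ⟨x, hx⟩ : ∃ x : ℕ → ℝ, ∀ n : ℕ, x n =
    (√(n:ℝ))⁻¹ * ((√((P:ℝ) * (1 - P)))⁻¹ * ((n:ℝ) * c - n * P)) := ⟨_, fun _ => rfl⟩
  have hx' : x = fun n : ℕ => (s⁻¹ * (c - p)) * √(n:ℝ) := by
    funext n
    rw [hx n, hPp, ← hs]
    rcases Nat.eq_zero_or_pos n with rfl | hn
    · simp
    have hn0 : 0 < √(n:ℝ) := Real.sqrt_pos.2 (by exact_mod_cast hn)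
    have h2 : (n:ℝ) = √(n:ℝ) * √(n:ℝ) := (Real.mul_self_sqrt (by positivity)).symm
    have h3 : (n:ℝ) * c - n * p = √(n:ℝ) * (√(n:ℝ) * (c - p)) := by
      rw [← mul_assoc, ← h2]; ring
    rw [h3]
    field_simp
  have hsq : Tendsto (fun n : ℕ => √(n:ℝ)) atTop atTop :=
    Real.tendsto_sqrt_atTop.comp tendsto_natCast_atTop_atTop
  have main := G_tendsto P u d hp0 hp1 hd0 hd1 hu hne c
  rw [hv]
  refine ⟨fun h => ?_, fun h => ?_, fun h => ?_⟩
  · have hlt : c - p < 0 := by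
      have := (Real.one_lt_exp_iff).1 h
      have := (mul_pos_iff_of_pos_left hΛ0).1 this
      linarith
    have hxb : Tendsto x atTop atBot := by
      rw [hx']
      exact hsq.const_mul_atTop_of_neg (mul_neg_of_pos_of_neg (inv_pos.2 hs0) hlt)
    have hF := Fcdf_bot P hp0 hp1 x hxb
    have := main 0 hc x hx hF (fun e he => ⟨1, one_pos, by
      filter_upwards [hF.eventually_lt_const he] with n hn
      linarith [Fcdf_nonneg P n (x n - 1)]⟩)
    simpa using this
  · have heq : c = p := by
      have := (Real.exp_eq_one_iff _).1 h
      rcases mul_eq_zero.1 this with h | h <;> linarith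
    have hx0 : ∀ n, x n = 0 := by intro n; rw [hx', heq]; simp
    have hF0 := Fcdf_tendsto P hp0 hp1 0
    have hF : Tendsto (fun n => Fcdf P n (x n)) atTop (nhds (1/2)) := by
      rw [gauss_zero] at hF0
      simpa only [hx0] using hF0
    have := main (1/2) hc x hx hF (fun e he => by
      obtain ⟨r, hr0, hr⟩ := gauss_small e he
      refine ⟨r, hr0, ?_⟩
      simp only [hx0, zero_sub]
      exact (hF0.sub (Fcdf_tendsto P hp0 hp1 (-r))).eventually_lt_const hr)
    simpa using this
  · have hlt : 0 < c - p := by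
      have := (Real.exp_lt_one_iff).1 h
      by_contra hcon
      nlinarith
    have hxt : ∀ r : ℝ, Tendsto (fun n => x n - r) atTop atTop := by
      intro r
      rw [hx']
      exact tendsto_atTop_add_const_right _ (-r)
        (hsq.const_mul_atTop (mul_pos (inv_pos.2 hs0) hlt))
    have hF1 := Fcdf_top P hp0 hp1 _ (hxt 1)
    have hF : Tendsto (fun n => Fcdf P n (x n)) atTop (nhds 1) := by
      simpa using Fcdf_top P hp0 hp1 _ (hxt 0)
    have := main 1 hc x hx hF (fun e he => ⟨1, one_pos,
      (hF.sub hF1).eventually_lt_const (by simpa using he)⟩)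
    have e : (1:ℝ) - 2 * 1 = -1 := by norm_num
    rw [e] at this
    exact this
end
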